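/- arXiv:1709.07264 — 2 statements merged into one kernel-verified Lean document; each statement's English description precedes it below -/
import Mathlib

section
/- Fix τ > 0. In the general detection model, the undetectable case is present, i.e. ‖P_(n) − Q_(n)‖ → 0, if and only if both I_{n,1,τ} → 0 and I_{n,2,τ} → 0 (as n → ∞). -/
open MeasureTheory Filter Topology

noncomputable section

/-- Mixture `Q = (1-e)·P + e·μ`. -/
def Qmix {α : Type*} [MeasurableSpace α] (P μ : Measure α) (e : ℝ) : Measure α :=
  (ENNReal.ofReal (1 - e)) • P + (ENNReal.ofReal e) • μ

/-- Real-valued Radon–Nikodym density `dμ/dP`. -/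
def dmuP {α : Type*} [MeasurableSpace α] (μ P : Measure α) (a : α) : ℝ :=
  (μ.rnDeriv P a).toReal

/-- `I_{n,1,x} = Σ_{i<k_n} ε_{n,i} μ_{n,i}({ε_{n,i}·dμ_{n,i}/dP_{n,i} > x})`. -/
def I1 {α : Type*} [MeasurableSpace α] (P μ : ℕ → ℕ → Measure α) (ε : ℕ → ℕ → ℝ)
    (k : ℕ → ℕ) (x : ℝ) (n : ℕ) : ℝ :=
  ∑ i ∈ Finset.range (k n),
    ε n i * ((μ n i) {a | x < ε n i * dmuP (μ n i) (P n i) a}).toReal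

/-- `I_{n,2,x} = Σ_{i<k_n} ε_{n,i}² E_{P_{n,i}}[(dμ/dP)² 1{ε·dμ/dP ≤ x} − 1]`. -/
def I2 {α : Type*} [MeasurableSpace α] (P μ : ℕ → ℕ → Measure α) (ε : ℕ → ℕ → ℝ)
    (k : ℕ → ℕ) (x : ℝ) (n : ℕ) : ℝ :=
  ∑ i ∈ Finset.range (k n),
    (ε n i) ^ 2 * ∫ a, ((dmuP (μ n i) (P n i) a) ^ 2 *
      (if ε n i * dmuP (μ n i) (P n i) a ≤ x then (1 : ℝ) else 0) - 1) ∂(P n i)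

/-- Product null measure `P_(n) = ⊗_{i<k_n} P_{n,i}`. -/
def Pprod {α : Type*} [MeasurableSpace α] (P : ℕ → ℕ → Measure α) (k : ℕ → ℕ) (n : ℕ) :
    Measure (Fin (k n) → α) :=
  Measure.pi (fun i => P n i)

/-- Product alternative measure `Q_(n) = ⊗_{i<k_n} Q_{n,i}`. -/
def Qprod {α : Type*} [MeasurableSpace α] (P μ : ℕ → ℕ → Measure α) (ε : ℕ → ℕ → ℝ)
    (k : ℕ → ℕ) (n : ℕ) : Measure (Fin (k n) → α) :=
  Measure.pi (fun i => Qmix (P n i) (μ n i) (ε n i))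

/-- Total variation distance `‖P − Q‖ = sup_A |P(A) − Q(A)|`. -/
def tvDist {β : Type*} [MeasurableSpace β] (P Q : Measure β) : ℝ :=
  ⨆ A : {s : Set β // MeasurableSet s}, |(P A.1).toReal - (Q A.1).toReal|

/-!
Total variation and Hellinger distance control each other by Le Cam's inequalities, and the
Hellinger affinity is multiplicative over products. Hence `‖P_(n) − Q_(n)‖ → 0` exactly when the
squared Hellinger distances `h_i` between `P_{n,i}` and `Q_{n,i}` sum to `o(1)`.

Write `u = ε · dμ/dP`, so that `Q` has density `1 + (u − ε)` with respect to `P`. Since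
`(√(1 + y) − 1)²` behaves like `y²` for bounded `y` and like `y` for `y` bounded away from `0`, the
distance `h` is comparable to `∫_{u > τ} u dP + ∫_{u ≤ τ} (u − ε)² dP`. The first integral is the
summand of `I₁`. Expanding the second, with `∫ (u − ε) dP = 0`, gives the summand of `I₂` up to
twice the summand of `I₁`.
-/

section ProbabilityDensity

variable {α : Type*} [MeasurableSpace α] {P : Measure α} {L : α → ℝ} {A : Set α}

/-- `L` is a real-valued probability density with respect to `P`. It is required to be nonnegative
everywhere and not only almost everywhere, and its integrability follows from `integral_eq_one`. -/
structure IsProbDensity (P : Measure α) (L : α → ℝ) : Prop where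
  measurable : Measurable L
  nonneg : ∀ a, 0 ≤ L a
  integral_eq_one : ∫ a, L a ∂P = 1

/-- The Hellinger affinity between `P` and the measure with density `L` with respect to `P`. -/
def hellingerAffinity (P : Measure α) (L : α → ℝ) : ℝ := ∫ a, √(L a) ∂P

/-- The squared Hellinger distance (without the normalization `1 / 2`) between `P` and the measure
with density `L` with respect to `P`. -/
def sqHellinger (P : Measure α) (L : α → ℝ) : ℝ := ∫ a, (√(L a) - 1) ^ 2 ∂P

lemma hellingerAffinity_nonneg (P : Measure α) (L : α → ℝ) : 0 ≤ hellingerAffinity P L :=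
  integral_nonneg fun _ => Real.sqrt_nonneg _

lemma sqHellinger_nonneg (P : Measure α) (L : α → ℝ) : 0 ≤ sqHellinger P L :=
  integral_nonneg fun _ => sq_nonneg _

namespace IsProbDensity

lemma integrable (hL : IsProbDensity P L) : Integrable L P :=
  integrable_of_integral_eq_one hL.integral_eq_one

lemma withDensity_apply_toReal (hL : IsProbDensity P L) (hA : MeasurableSet A) :
    (P.withDensity (fun a => ENNReal.ofReal (L a)) A).toReal = ∫ a in A, L a ∂P := by
  rw [withDensity_apply _ hA, ← ofReal_integral_eq_lintegral_ofReal hL.integrable.integrableOn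
    (ae_of_all _ hL.nonneg), ENNReal.toReal_ofReal (integral_nonneg hL.nonneg)]

lemma isProbabilityMeasure_withDensity (hL : IsProbDensity P L) :
    IsProbabilityMeasure (P.withDensity fun a => ENNReal.ofReal (L a)) := by
  refine ⟨?_⟩
  rw [withDensity_apply _ MeasurableSet.univ, Measure.restrict_univ,
    ← ofReal_integral_eq_lintegral_ofReal hL.integrable (ae_of_all _ hL.nonneg),
    hL.integral_eq_one, ENNReal.ofReal_one]

lemma memLp_sqrt (hL : IsProbDensity P L) : MemLp (fun a => √(L a)) 2 P := by
  rw [memLp_two_iff_integrable_sq hL.measurable.sqrt.aestronglyMeasurable]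
  simpa only [Real.sq_sqrt (hL.nonneg _)] using hL.integrable

variable [IsProbabilityMeasure P]

lemma integrable_sqrt (hL : IsProbDensity P L) : Integrable (fun a => √(L a)) P :=
  hL.memLp_sqrt.integrable one_le_two

lemma integrable_sqrt_sub_one_sq (hL : IsProbDensity P L) :
    Integrable (fun a => (√(L a) - 1) ^ 2) P :=
  (hL.memLp_sqrt.sub (memLp_const 1)).integrable_sq

lemma integral_sqrt_add_const_sq (hL : IsProbDensity P L) (c : ℝ) :
    ∫ a, (√(L a) + c) ^ 2 ∂P = 1 + 2 * c * hellingerAffinity P L + c ^ 2 := by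
  have expand : ∀ a, (√(L a) + c) ^ 2 = L a + 2 * c * √(L a) + c ^ 2 := fun a => by
    linear_combination Real.sq_sqrt (hL.nonneg a)
  have cross_integrable := hL.integrable_sqrt.const_mul (2 * c)
  simp only [expand]
  rw [integral_add (f := fun a => L a + 2 * c * √(L a)) (hL.integrable.add cross_integrable)
      (integrable_const _),
    integral_add hL.integrable cross_integrable, integral_const_mul, hL.integral_eq_one,
    hellingerAffinity]
  simp

lemma sqHellinger_eq (hL : IsProbDensity P L) :
    sqHellinger P L = 2 * (1 - hellingerAffinity P L) := by
  simp only [sqHellinger, sub_eq_add_neg]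
  rw [hL.integral_sqrt_add_const_sq (-1)]
  ring

lemma hellingerAffinity_eq (hL : IsProbDensity P L) :
    hellingerAffinity P L = 1 - sqHellinger P L / 2 := by
  rw [hL.sqHellinger_eq]
  ring

lemma sqHellinger_le_two (hL : IsProbDensity P L) : sqHellinger P L ≤ 2 := by
  linarith [hL.sqHellinger_eq, hellingerAffinity_nonneg P L]

end IsProbDensity

end ProbabilityDensity

section LeCam

variable {α : Type*} [MeasurableSpace α] {P : Measure α} {L : α → ℝ}

lemma tvDist_nonneg (P Q : Measure α) : 0 ≤ tvDist P Q :=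
  Real.iSup_nonneg fun _ => abs_nonneg _

lemma abs_sub_le_tvDist (P Q : Measure α) [IsProbabilityMeasure P] [IsProbabilityMeasure Q]
    {A : Set α} (hA : MeasurableSet A) : |(P A).toReal - (Q A).toReal| ≤ tvDist P Q := by
  refine le_ciSup (f := fun B : {s : Set α // MeasurableSet s} =>
    |(P B.1).toReal - (Q B.1).toReal|) ⟨1, ?_⟩ ⟨A, hA⟩
  rintro _ ⟨B, rfl⟩
  exact abs_sub_le_of_nonneg_of_le ENNReal.toReal_nonneg measureReal_le_one
    ENNReal.toReal_nonneg measureReal_le_one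

lemma two_mul_abs_setIntegral_le_integral_abs {f : α → ℝ} (hf : Integrable f P)
    (hf0 : ∫ a, f a ∂P = 0) {A : Set α} (hA : MeasurableSet A) :
    2 * |∫ a in A, f a ∂P| ≤ ∫ a, |f a| ∂P := by
  have compl_eq : ∫ a in Aᶜ, f a ∂P = -∫ a in A, f a ∂P := by
    linarith [integral_add_compl hA hf]
  calc 2 * |∫ a in A, f a ∂P| = |∫ a in A, f a ∂P| + |∫ a in Aᶜ, f a ∂P| := by
        rw [compl_eq, abs_neg, two_mul]
    _ ≤ ∫ a in A, |f a| ∂P + ∫ a in Aᶜ, |f a| ∂P :=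
        add_le_add abs_integral_le_integral_abs abs_integral_le_integral_abs
    _ = ∫ a, |f a| ∂P := integral_add_compl hA hf.abs

namespace IsProbDensity

variable [IsProbabilityMeasure P]

lemma measure_sub_withDensity_toReal (hL : IsProbDensity P L) {A : Set α} (hA : MeasurableSet A) :
    (P A).toReal - (P.withDensity (fun a => ENNReal.ofReal (L a)) A).toReal =
      ∫ a in A, (1 - L a) ∂P := by
  rw [integral_sub (integrable_const 1) hL.integrable.integrableOn, hL.withDensity_apply_toReal hA]
  simp [measureReal_def]

lemma integral_abs_one_sub_le (hL : IsProbDensity P L) :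
    ∫ a, |1 - L a| ∂P ≤ 2 * √(1 - hellingerAffinity P L ^ 2) := by
  have factor : ∀ a, |1 - L a| = |√(L a) + (-1)| * |√(L a) + 1| := fun a => by
    rw [← abs_mul, abs_sub_comm]
    congr 1
    linear_combination -Real.sq_sqrt (hL.nonneg a)
  have memLp_add (c : ℝ) : MemLp (fun a => |√(L a) + c|) (ENNReal.ofReal 2) P := by
    rw [ENNReal.ofReal_ofNat]
    exact (hL.memLp_sqrt.add (memLp_const c)).abs
  calc ∫ a, |1 - L a| ∂P = ∫ a, |√(L a) + (-1)| * |√(L a) + 1| ∂P := by simp only [factor]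
    _ ≤ √(∫ a, (√(L a) + (-1)) ^ 2 ∂P) * √(∫ a, (√(L a) + 1) ^ 2 ∂P) := by
        simpa only [Real.sqrt_eq_rpow, Real.rpow_two, sq_abs] using
          integral_mul_le_Lp_mul_Lq_of_nonneg Real.HolderConjugate.two_two
            (ae_of_all _ fun _ => abs_nonneg _) (ae_of_all _ fun _ => abs_nonneg _)
            (memLp_add (-1)) (memLp_add 1)
    _ = √(2 ^ 2 * (1 - hellingerAffinity P L ^ 2)) := by
        rw [← Real.sqrt_mul (integral_nonneg fun _ => sq_nonneg _),
          hL.integral_sqrt_add_const_sq, hL.integral_sqrt_add_const_sq]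
        ring_nf
    _ = 2 * √(1 - hellingerAffinity P L ^ 2) := by
        rw [Real.sqrt_mul (sq_nonneg 2), Real.sqrt_sq zero_le_two]

theorem tvDist_le_sqrt_one_sub_hellingerAffinity_sq (hL : IsProbDensity P L) :
    tvDist P (P.withDensity fun a => ENNReal.ofReal (L a)) ≤
      √(1 - hellingerAffinity P L ^ 2) := by
  have : Nonempty {s : Set α // MeasurableSet s} := ⟨⟨∅, MeasurableSet.empty⟩⟩
  have integral_eq_zero : ∫ a, (1 - L a) ∂P = 0 := by
    rw [integral_sub (integrable_const 1) hL.integrable, hL.integral_eq_one]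
    simp
  refine ciSup_le fun A => ?_
  rw [hL.measure_sub_withDensity_toReal A.2]
  have half_L1 := two_mul_abs_setIntegral_le_integral_abs
    (f := fun a => 1 - L a) ((integrable_const 1).sub hL.integrable) integral_eq_zero A.2
  linarith [hL.integral_abs_one_sub_le]

theorem one_sub_hellingerAffinity_le_tvDist (hL : IsProbDensity P L) :
    1 - hellingerAffinity P L ≤ tvDist P (P.withDensity fun a => ENNReal.ofReal (L a)) := by
  have := hL.isProbabilityMeasure_withDensity
  have hA : MeasurableSet {a | L a ≤ 1} := measurableSet_le hL.measurable measurable_const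
  have pointwise : ∀ a, 1 - √(L a) ≤ {a | L a ≤ 1}.indicator (fun a => 1 - L a) a := fun a => by
    have sq_eq := Real.sq_sqrt (hL.nonneg a)
    by_cases ha : L a ≤ 1
    · rw [Set.indicator_of_mem (by exact ha)]
      nlinarith [Real.sqrt_nonneg (L a), Real.sqrt_le_one.mpr ha]
    · rw [Set.indicator_of_notMem (by exact ha), sub_nonpos]
      exact Real.one_le_sqrt.mpr (not_le.mp ha).le
  calc 1 - hellingerAffinity P L = ∫ a, (1 - √(L a)) ∂P := by
        rw [integral_sub (integrable_const 1) hL.integrable_sqrt, hellingerAffinity]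
        simp
    _ ≤ ∫ a in {a | L a ≤ 1}, (1 - L a) ∂P := by
        rw [← integral_indicator hA]
        exact integral_mono ((integrable_const 1).sub hL.integrable_sqrt)
          (((integrable_const 1).sub hL.integrable).indicator hA) pointwise
    _ ≤ tvDist P (P.withDensity fun a => ENNReal.ofReal (L a)) := by
        rw [← hL.measure_sub_withDensity_toReal hA]
        exact (le_abs_self _).trans (abs_sub_le_tvDist _ _ hA)

end IsProbDensity

end LeCam

section Product

variable {ι : Type*} [Fintype ι] {α : ι → Type*} [∀ i, MeasurableSpace (α i)]
  {P : ∀ i, Measure (α i)} {L : ∀ i, α i → ℝ}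

lemma hellingerAffinity_pi [∀ i, SigmaFinite (P i)] (hL : ∀ i a, 0 ≤ L i a) :
    hellingerAffinity (Measure.pi P) (fun x => ∏ i, L i (x i)) =
      ∏ i, hellingerAffinity (P i) (L i) := by
  simp only [hellingerAffinity, Real.sqrt_prod _ fun i _ => hL i _]
  exact integral_fintype_prod_eq_prod fun i a => √(L i a)

lemma IsProbDensity.pi [∀ i, SigmaFinite (P i)] (hL : ∀ i, IsProbDensity (P i) (L i)) :
    IsProbDensity (Measure.pi P) (fun x => ∏ i, L i (x i)) where
  measurable :=
    Finset.measurable_prod _ fun i _ => (hL i).measurable.comp (measurable_pi_apply i)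
  nonneg _ := Finset.prod_nonneg fun i _ => (hL i).nonneg _
  integral_eq_one := by
    rw [integral_fintype_prod_eq_prod]
    exact Finset.prod_eq_one fun i _ => (hL i).integral_eq_one

lemma pi_withDensity_ofReal [∀ i, SigmaFinite (P i)] (hL0 : ∀ i a, 0 ≤ L i a)
    (hL : ∀ i, Integrable (L i) (P i)) :
    Measure.pi (fun i => (P i).withDensity fun a => ENNReal.ofReal (L i a)) =
      (Measure.pi P).withDensity fun x => ENNReal.ofReal (∏ i, L i (x i)) := by
  have := fun i => isFiniteMeasure_withDensity_ofReal (hL i).2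
  refine Measure.pi_eq fun s hs => ?_
  rw [withDensity_apply _ (MeasurableSet.univ_pi hs),
    ← ofReal_integral_eq_lintegral_ofReal (Integrable.fintype_prod_dep hL).integrableOn
      (ae_of_all _ fun x => Finset.prod_nonneg fun i _ => hL0 i _),
    Measure.restrict_pi_pi, integral_fintype_prod_eq_prod,
    ENNReal.ofReal_prod_of_nonneg fun i _ => integral_nonneg (hL0 i)]
  refine Finset.prod_congr rfl fun i _ => ?_
  rw [withDensity_apply _ (hs i), ← ofReal_integral_eq_lintegral_ofReal (hL i).integrableOn
    (ae_of_all _ (hL0 i))]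

end Product

section Asymptotics

variable {N : Type*} {l : Filter N} {ι : N → Type*} [∀ n, Fintype (ι n)]

lemma one_sub_sum_le_prod_one_sub {κ : Type*} (s : Finset κ) {x : κ → ℝ}
    (hx0 : ∀ i, 0 ≤ x i) (hx1 : ∀ i, x i ≤ 1) : 1 - ∑ i ∈ s, x i ≤ ∏ i ∈ s, (1 - x i) := by
  classical
  induction s using Finset.induction_on with
  | empty => simp
  | insert j s hj ih =>
    have prod_le_one : ∏ i ∈ s, (1 - x i) ≤ 1 :=
      Finset.prod_le_one (fun i _ => sub_nonneg.mpr (hx1 i)) fun i _ => sub_le_self 1 (hx0 i)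
    rw [Finset.sum_insert hj, Finset.prod_insert hj]
    nlinarith [hx0 j]

lemma tendsto_prod_one_sub_nhds_one_iff {x : ∀ n, ι n → ℝ} (hx0 : ∀ n i, 0 ≤ x n i)
    (hx1 : ∀ n i, x n i ≤ 1) :
    Tendsto (fun n => ∏ i, (1 - x n i)) l (𝓝 1) ↔ Tendsto (fun n => ∑ i, x n i) l (𝓝 0) := by
  constructor <;> intro h
  · have neg_log_tendsto : Tendsto (fun n => -Real.log (∏ i, (1 - x n i))) l (𝓝 0) := by
      simpa using (h.log one_ne_zero).neg
    refine squeeze_zero' (Eventually.of_forall fun n => Finset.sum_nonneg fun i _ => hx0 n i) ?_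
      neg_log_tendsto
    filter_upwards [h.eventually (lt_mem_nhds one_pos)] with n hn
    have prod_le_exp : ∏ i, (1 - x n i) ≤ Real.exp (-∑ i, x n i) := by
      rw [← Finset.sum_neg_distrib, Real.exp_sum]
      exact Finset.prod_le_prod (fun i _ => sub_nonneg.mpr (hx1 n i))
        fun i _ => Real.one_sub_le_exp_neg _
    linarith [(Real.log_le_iff_le_exp hn).mpr prod_le_exp]
  · refine tendsto_of_tendsto_of_tendsto_of_le_of_le (by simpa using h.const_sub 1)
      tendsto_const_nhds (fun n => one_sub_sum_le_prod_one_sub _ (hx0 n) (hx1 n)) fun n => ?_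
    exact Finset.prod_le_one (fun i _ => sub_nonneg.mpr (hx1 n i))
      fun i _ => sub_le_self 1 (hx0 n i)

lemma tendsto_sum_zero_of_le_const_mul {f g : ∀ n, ι n → ℝ} {C : ℝ} (hf : ∀ n i, 0 ≤ f n i)
    (hfg : ∀ᶠ n in l, ∀ i, f n i ≤ C * g n i) (hg : Tendsto (fun n => ∑ i, g n i) l (𝓝 0)) :
    Tendsto (fun n => ∑ i, f n i) l (𝓝 0) := by
  refine squeeze_zero' (Eventually.of_forall fun n => Finset.sum_nonneg fun i _ => hf n i)
    (hfg.mono fun n hn => ?_) (by simpa using hg.const_mul C)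
  rw [Finset.mul_sum]
  exact Finset.sum_le_sum fun i _ => hn i

variable {α : ∀ n, ι n → Type*} [∀ n i, MeasurableSpace (α n i)] {P : ∀ n i, Measure (α n i)}
  [∀ n i, IsProbabilityMeasure (P n i)]

theorem tendsto_tvDist_withDensity_iff_tendsto_hellingerAffinity {β : N → Type*}
    [∀ n, MeasurableSpace (β n)] {R : ∀ n, Measure (β n)} [∀ n, IsProbabilityMeasure (R n)]
    {L : ∀ n, β n → ℝ} (hL : ∀ n, IsProbDensity (R n) (L n)) :
    Tendsto (fun n => tvDist (R n) ((R n).withDensity fun a => ENNReal.ofReal (L n a))) l (𝓝 0) ↔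
      Tendsto (fun n => hellingerAffinity (R n) (L n)) l (𝓝 1) := by
  constructor <;> intro h
  · have one_sub_tendsto : Tendsto (fun n => 1 - hellingerAffinity (R n) (L n)) l (𝓝 0) := by
      refine squeeze_zero (fun n => ?_)
        (fun n => (hL n).one_sub_hellingerAffinity_le_tvDist) h
      linarith [(hL n).sqHellinger_eq, sqHellinger_nonneg (R n) (L n)]
    simpa using one_sub_tendsto.const_sub 1
  · refine squeeze_zero (fun n => tvDist_nonneg _ _)
      (fun n => (hL n).tvDist_le_sqrt_one_sub_hellingerAffinity_sq) ?_
    simpa using ((h.pow 2).const_sub 1).sqrt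

theorem tendsto_tvDist_pi_withDensity_iff_tendsto_sum_sqHellinger {L : ∀ n i, α n i → ℝ}
    (hL : ∀ n i, IsProbDensity (P n i) (L n i)) :
    Tendsto (fun n => tvDist (Measure.pi (P n))
        (Measure.pi fun i => (P n i).withDensity fun a => ENNReal.ofReal (L n i a))) l (𝓝 0) ↔
      Tendsto (fun n => ∑ i, sqHellinger (P n i) (L n i)) l (𝓝 0) := by
  simp only [pi_withDensity_ofReal (fun i => (hL _ i).nonneg) fun i => (hL _ i).integrable]
  rw [tendsto_tvDist_withDensity_iff_tendsto_hellingerAffinity fun n => IsProbDensity.pi (hL n)]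
  simp only [hellingerAffinity_pi fun i => (hL _ i).nonneg, (hL _ _).hellingerAffinity_eq]
  rw [tendsto_prod_one_sub_nhds_one_iff
    (fun n i => div_nonneg (sqHellinger_nonneg _ _) zero_le_two)
    fun n i => (div_le_one two_pos).mpr (hL n i).sqHellinger_le_two]
  simp only [← Finset.sum_div]
  constructor <;> intro h
  · simpa using h.mul_const 2
  · simpa using h.div_const 2

end Asymptotics

section HellingerSplitting

lemma sqrt_sub_one_sq_le_sub_one {x : ℝ} (hx : 1 ≤ x) : (√x - 1) ^ 2 ≤ x - 1 := by
  nlinarith [Real.sq_sqrt (zero_le_one.trans hx), Real.one_le_sqrt.mpr hx]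

lemma sub_one_sq_eq_mul_sqrt_sub_one_sq {x : ℝ} (hx : 0 ≤ x) :
    (x - 1) ^ 2 = (√x + 1) ^ 2 * (√x - 1) ^ 2 := by
  nth_rewrite 1 [← Real.sq_sqrt hx]
  ring

lemma sqrt_sub_one_sq_le_sub_one_sq {x : ℝ} (hx : 0 ≤ x) : (√x - 1) ^ 2 ≤ (x - 1) ^ 2 := by
  rw [sub_one_sq_eq_mul_sqrt_sub_one_sq hx]
  exact le_mul_of_one_le_left (sq_nonneg _)
    (one_le_pow₀ (le_add_of_nonneg_left (Real.sqrt_nonneg x)))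

lemma sub_one_sq_le_mul_sqrt_sub_one_sq {x : ℝ} (hx : 0 ≤ x) :
    (x - 1) ^ 2 ≤ 2 * (x + 1) * (√x - 1) ^ 2 := by
  rw [sub_one_sq_eq_mul_sqrt_sub_one_sq hx]
  gcongr
  nlinarith [Real.sq_sqrt hx, sq_nonneg (√x - 1)]

lemma sub_one_le_mul_sqrt_sub_one_sq {s x : ℝ} (hs : 1 < s) (hsx : s ≤ x) :
    x - 1 ≤ 2 * (s + 1) / (s - 1) * (√x - 1) ^ 2 := by
  have hs1 : 0 < s - 1 := sub_pos.mpr hs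
  have hx1 : 0 < x - 1 := hs1.trans_le (sub_le_sub_right hsx 1)
  have ratio_le : (x + 1) * (s - 1) ≤ (s + 1) * (x - 1) := by linarith
  have scaled : (s - 1) * (x - 1) * (x - 1) ≤ 2 * (s + 1) * (√x - 1) ^ 2 * (x - 1) :=
    calc (s - 1) * (x - 1) * (x - 1) = (s - 1) * (x - 1) ^ 2 := by ring
      _ ≤ (s - 1) * (2 * (x + 1) * (√x - 1) ^ 2) := by
          gcongr
          exact sub_one_sq_le_mul_sqrt_sub_one_sq (by linarith)
      _ = 2 * (√x - 1) ^ 2 * ((x + 1) * (s - 1)) := by ring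
      _ ≤ 2 * (√x - 1) ^ 2 * ((s + 1) * (x - 1)) := by gcongr
      _ = 2 * (s + 1) * (√x - 1) ^ 2 * (x - 1) := by ring
  rw [div_mul_eq_mul_div, le_div_iff₀' hs1]
  exact le_of_mul_le_mul_right scaled hx1

namespace IsProbDensity

variable {α : Type*} [MeasurableSpace α] {P : Measure α} [IsProbabilityMeasure P] {L : α → ℝ}
  {A : Set α} {b s : ℝ}

lemma integrable_sub_one (hL : IsProbDensity P L) : Integrable (fun a => L a - 1) P :=
  hL.integrable.sub (integrable_const 1)

lemma setIntegral_sqrt_sub_one_sq_le_sqHellinger (hL : IsProbDensity P L) (A : Set α) :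
    ∫ a in A, (√(L a) - 1) ^ 2 ∂P ≤ sqHellinger P L :=
  setIntegral_le_integral hL.integrable_sqrt_sub_one_sq (ae_of_all _ fun _ => sq_nonneg _)

lemma integrableOn_sub_one_sq (hL : IsProbDensity P L) (hA : MeasurableSet A)
    (hb : ∀ a ∈ A, L a ≤ b) : IntegrableOn (fun a => (L a - 1) ^ 2) A P := by
  refine Integrable.mono' (g := fun a => 2 * (b + 1) * (√(L a) - 1) ^ 2)
    (hL.integrable_sqrt_sub_one_sq.const_mul _).integrableOn
    ((hL.measurable.sub_const 1).pow_const 2).aestronglyMeasurable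
    ((ae_restrict_mem hA).mono fun a ha => ?_)
  rw [Real.norm_of_nonneg (sq_nonneg _)]
  refine (sub_one_sq_le_mul_sqrt_sub_one_sq (hL.nonneg a)).trans ?_
  gcongr
  exact hb a ha

theorem setIntegral_sub_one_sq_le_mul_sqHellinger (hL : IsProbDensity P L) (hA : MeasurableSet A)
    (hb0 : 0 ≤ b) (hb : ∀ a ∈ A, L a ≤ b) :
    ∫ a in A, (L a - 1) ^ 2 ∂P ≤ 2 * (b + 1) * sqHellinger P L := by
  calc ∫ a in A, (L a - 1) ^ 2 ∂P ≤ ∫ a in A, 2 * (b + 1) * (√(L a) - 1) ^ 2 ∂P := by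
        refine setIntegral_mono_on (hL.integrableOn_sub_one_sq hA hb)
          (hL.integrable_sqrt_sub_one_sq.const_mul _).integrableOn hA fun a ha =>
            (sub_one_sq_le_mul_sqrt_sub_one_sq (hL.nonneg a)).trans ?_
        gcongr
        exact hb a ha
    _ = 2 * (b + 1) * ∫ a in A, (√(L a) - 1) ^ 2 ∂P := integral_const_mul _ _
    _ ≤ 2 * (b + 1) * sqHellinger P L := by
        gcongr
        exact hL.setIntegral_sqrt_sub_one_sq_le_sqHellinger A

theorem setIntegral_sub_one_le_mul_sqHellinger (hL : IsProbDensity P L) (hA : MeasurableSet A)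
    (hs : 1 < s) (hsL : ∀ a ∈ A, s ≤ L a) :
    ∫ a in A, (L a - 1) ∂P ≤ 2 * (s + 1) / (s - 1) * sqHellinger P L := by
  calc ∫ a in A, (L a - 1) ∂P ≤ ∫ a in A, 2 * (s + 1) / (s - 1) * (√(L a) - 1) ^ 2 ∂P :=
        setIntegral_mono_on hL.integrable_sub_one.integrableOn
          (hL.integrable_sqrt_sub_one_sq.const_mul _).integrableOn hA
          fun a ha => sub_one_le_mul_sqrt_sub_one_sq hs (hsL a ha)
    _ = 2 * (s + 1) / (s - 1) * ∫ a in A, (√(L a) - 1) ^ 2 ∂P := integral_const_mul _ _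
    _ ≤ 2 * (s + 1) / (s - 1) * sqHellinger P L :=
        mul_le_mul_of_nonneg_left (hL.setIntegral_sqrt_sub_one_sq_le_sqHellinger A)
          (div_nonneg (by linarith) (sub_pos.mpr hs).le)

theorem sqHellinger_le_setIntegral_add (hL : IsProbDensity P L) (hA : MeasurableSet A)
    (hLA : ∀ a ∈ A, 1 ≤ L a) (hb : ∀ a ∈ Aᶜ, L a ≤ b) :
    sqHellinger P L ≤ ∫ a in A, (L a - 1) ∂P + ∫ a in Aᶜ, (L a - 1) ^ 2 ∂P := by
  have sqrt_integrable := hL.integrable_sqrt_sub_one_sq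
  rw [sqHellinger, ← integral_add_compl hA sqrt_integrable]
  exact add_le_add
    (setIntegral_mono_on sqrt_integrable.integrableOn hL.integrable_sub_one.integrableOn hA
      fun a ha => sqrt_sub_one_sq_le_sub_one (hLA a ha))
    (setIntegral_mono_on sqrt_integrable.integrableOn (hL.integrableOn_sub_one_sq hA.compl hb)
      hA.compl fun a _ => sqrt_sub_one_sq_le_sub_one_sq (hL.nonneg a))

end IsProbDensity

end HellingerSplitting

section Mixture

variable {α : Type*} [MeasurableSpace α] (P μ : Measure α) (e τ : ℝ)

/-- The density of the mixture `Qmix P μ e` with respect to the noise `P`. -/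
def mixDensity (a : α) : ℝ := 1 - e + e * dmuP μ P a

/-- The event `{e · dμ/dP > τ}`. -/
def tailSet : Set α := {a | τ < e * dmuP μ P a}

/-- The contribution of one coordinate to `I1`. -/
def tailMass : ℝ := e * (μ (tailSet P μ e τ)).toReal

/-- The contribution of one coordinate to `I2`. -/
def truncMoment : ℝ :=
  e ^ 2 * ∫ a, (dmuP μ P a ^ 2 * (if e * dmuP μ P a ≤ τ then (1 : ℝ) else 0) - 1) ∂P

/-- The variance of `mixDensity` under `P`, restricted to the complement of `tailSet`. -/
def truncVariance : ℝ := ∫ a in (tailSet P μ e τ)ᶜ, (mixDensity P μ e a - 1) ^ 2 ∂P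

variable {P μ e τ}

lemma dmuP_nonneg (a : α) : 0 ≤ dmuP μ P a := ENNReal.toReal_nonneg

lemma measurable_dmuP : Measurable (dmuP μ P) :=
  (Measure.measurable_rnDeriv μ P).ennreal_toReal

lemma measurableSet_tailSet : MeasurableSet (tailSet P μ e τ) :=
  measurableSet_lt measurable_const (measurable_dmuP.const_mul e)

lemma tailMass_nonneg (he : 0 ≤ e) : 0 ≤ tailMass P μ e τ :=
  mul_nonneg he ENNReal.toReal_nonneg

lemma truncVariance_nonneg : 0 ≤ truncVariance P μ e τ :=
  integral_nonneg fun _ => sq_nonneg _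

lemma mixDensity_sub_one (a : α) : mixDensity P μ e a - 1 = e * dmuP μ P a - e := by
  rw [mixDensity]
  ring

lemma mixDensity_le_of_notMem_tailSet (he : 0 ≤ e) {a : α} (ha : a ∈ (tailSet P μ e τ)ᶜ) :
    mixDensity P μ e a ≤ 1 + τ := by
  have : e * dmuP μ P a ≤ τ := not_lt.mp ha
  linarith [mixDensity_sub_one (P := P) (μ := μ) (e := e) a]

lemma le_mixDensity_of_mem_tailSet {ρ : ℝ} (heρ : e ≤ ρ) {a : α} (ha : a ∈ tailSet P μ e τ) :
    1 + τ - ρ ≤ mixDensity P μ e a := by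
  have : τ < e * dmuP μ P a := ha
  linarith [mixDensity_sub_one (P := P) (μ := μ) (e := e) a]

lemma integrable_dmuP [IsFiniteMeasure μ] : Integrable (dmuP μ P) P :=
  Measure.integrable_toReal_rnDeriv

lemma setIntegral_mul_dmuP [SigmaFinite μ] [SigmaFinite P] (hac : μ ≪ P) (A : Set α) :
    ∫ a in A, e * dmuP μ P a ∂P = e * μ.real A := by
  rw [integral_const_mul]
  exact congrArg (e * ·) (Measure.setIntegral_toReal_rnDeriv hac A)

lemma setIntegral_tailSet_mul_dmuP [SigmaFinite μ] [SigmaFinite P] (hac : μ ≪ P) :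
    ∫ a in tailSet P μ e τ, e * dmuP μ P a ∂P = tailMass P μ e τ :=
  setIntegral_mul_dmuP hac _

lemma withDensity_ofReal_dmuP [SigmaFinite μ] [SigmaFinite P] (hac : μ ≪ P) :
    P.withDensity (fun a => ENNReal.ofReal (dmuP μ P a)) = μ := by
  conv_rhs => rw [← Measure.withDensity_rnDeriv_eq μ P hac]
  refine withDensity_congr_ae ?_
  filter_upwards [Measure.rnDeriv_lt_top μ P] with a ha using ENNReal.ofReal_toReal ha.ne

lemma Qmix_eq_withDensity [SigmaFinite μ] [SigmaFinite P] (hac : μ ≪ P)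
    (he : e ∈ Set.Icc (0 : ℝ) 1) :
    Qmix P μ e = P.withDensity fun a => ENNReal.ofReal (mixDensity P μ e a) := by
  have density_eq : (fun a => ENNReal.ofReal (mixDensity P μ e a)) =
      (fun _ => ENNReal.ofReal (1 - e)) +
        ENNReal.ofReal e • fun a => ENNReal.ofReal (dmuP μ P a) := by
    funext a
    rw [mixDensity, ENNReal.ofReal_add (sub_nonneg.mpr he.2)
      (mul_nonneg he.1 (dmuP_nonneg a)), ENNReal.ofReal_mul he.1]
    rfl
  rw [density_eq, withDensity_add_left measurable_const, withDensity_const,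
    withDensity_smul _ measurable_dmuP.ennreal_ofReal, withDensity_ofReal_dmuP hac, Qmix]

lemma setIntegral_tailSet_mixDensity_sub_one [IsFiniteMeasure μ] [IsFiniteMeasure P]
    (hac : μ ≪ P) :
    ∫ a in tailSet P μ e τ, (mixDensity P μ e a - 1) ∂P =
      tailMass P μ e τ - e * P.real (tailSet P μ e τ) := by
  simp only [mixDensity_sub_one]
  rw [integral_sub (integrable_dmuP.const_mul e).integrableOn (integrable_const e),
    setIntegral_tailSet_mul_dmuP hac]
  simp [mul_comm]

lemma mul_measureReal_tailSet_le_tailMass [IsFiniteMeasure μ] [IsFiniteMeasure P]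
    (hac : μ ≪ P) :
    τ * P.real (tailSet P μ e τ) ≤ tailMass P μ e τ := by
  rw [← setIntegral_tailSet_mul_dmuP hac]
  exact setIntegral_ge_of_const_le_real measurableSet_tailSet (measure_ne_top _ _)
    (fun a ha => (show τ < e * dmuP μ P a from ha).le) (integrable_dmuP.const_mul e).integrableOn

lemma integrableOn_compl_tailSet_sq [IsFiniteMeasure P] (he : 0 ≤ e) :
    IntegrableOn (fun a => (e * dmuP μ P a) ^ 2) (tailSet P μ e τ)ᶜ P := by
  refine Integrable.mono' (g := fun _ => τ ^ 2) (integrable_const _)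
    ((measurable_dmuP.const_mul e).pow_const 2).aestronglyMeasurable
    ((ae_restrict_mem measurableSet_tailSet.compl).mono fun a ha => ?_)
  rw [Real.norm_of_nonneg (sq_nonneg _)]
  exact pow_le_pow_left₀ (mul_nonneg he (dmuP_nonneg a)) (not_lt.mp ha) 2

lemma truncMoment_eq_setIntegral_sub [IsProbabilityMeasure P] (he : 0 ≤ e) :
    truncMoment P μ e τ = ∫ a in (tailSet P μ e τ)ᶜ, (e * dmuP μ P a) ^ 2 ∂P - e ^ 2 := by
  have integrand_eq (a : α) :
      e ^ 2 * (dmuP μ P a ^ 2 * (if e * dmuP μ P a ≤ τ then (1 : ℝ) else 0) - 1) =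
        (tailSet P μ e τ)ᶜ.indicator (fun a => (e * dmuP μ P a) ^ 2) a - e ^ 2 := by
    simp only [Set.indicator_apply, tailSet, Set.mem_compl_iff, Set.mem_ofPred_eq, not_lt]
    split_ifs <;> ring
  have hA := (measurableSet_tailSet (P := P) (μ := μ) (e := e) (τ := τ)).compl
  rw [truncMoment, ← integral_const_mul]
  simp only [integrand_eq]
  rw [integral_sub ((integrableOn_compl_tailSet_sq he).integrable_indicator hA)
    (integrable_const _), integral_indicator hA]
  simp

variable [IsProbabilityMeasure P] [IsProbabilityMeasure μ]

lemma isProbDensity_mixDensity (hac : μ ≪ P) (he : e ∈ Set.Icc (0 : ℝ) 1) :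
    IsProbDensity P (mixDensity P μ e) where
  measurable := (measurable_dmuP.const_mul e).const_add (1 - e)
  nonneg a := add_nonneg (sub_nonneg.mpr he.2) (mul_nonneg he.1 (dmuP_nonneg a))
  integral_eq_one := by
    have integral_mul_dmuP : ∫ a, e * dmuP μ P a ∂P = e := by
      simpa using setIntegral_mul_dmuP (e := e) hac Set.univ
    simp only [mixDensity]
    rw [integral_add (integrable_const _) (integrable_dmuP.const_mul e), integral_mul_dmuP]
    simp

theorem truncVariance_le_mul_sqHellinger (hac : μ ≪ P) (he : e ∈ Set.Icc (0 : ℝ) 1)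
    (hτ : 0 ≤ τ) :
    truncVariance P μ e τ ≤ 2 * (1 + τ + 1) * sqHellinger P (mixDensity P μ e) :=
  (isProbDensity_mixDensity hac he).setIntegral_sub_one_sq_le_mul_sqHellinger
    measurableSet_tailSet.compl (by positivity) fun _ => mixDensity_le_of_notMem_tailSet he.1

theorem tailMass_le_mul_sqHellinger {ρ : ℝ} (hac : μ ≪ P) (he : e ∈ Set.Icc (0 : ℝ) 1)
    (heρ : e ≤ ρ) (hρτ : ρ < τ) :
    tailMass P μ e τ ≤ τ / (τ - ρ) * (2 * (1 + τ - ρ + 1) / (1 + τ - ρ - 1)) *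
      sqHellinger P (mixDensity P μ e) := by
  have hτ : 0 < τ := (he.1.trans heρ).trans_lt hρτ
  have hρτ' : 0 < τ - ρ := sub_pos.mpr hρτ
  have tailMass_le : tailMass P μ e τ ≤
      τ / (τ - ρ) * ∫ a in tailSet P μ e τ, (mixDensity P μ e a - 1) ∂P := by
    rw [setIntegral_tailSet_mixDensity_sub_one hac, div_mul_eq_mul_div, le_div_iff₀ hρτ']
    have markov := mul_measureReal_tailSet_le_tailMass (e := e) (τ := τ) hac
    nlinarith [mul_le_mul_of_nonneg_right heρ (tailMass_nonneg (P := P) (μ := μ) (τ := τ) he.1),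
      mul_le_mul_of_nonneg_left markov he.1]
  refine tailMass_le.trans ?_
  rw [mul_assoc]
  gcongr
  exact (isProbDensity_mixDensity hac he).setIntegral_sub_one_le_mul_sqHellinger
    measurableSet_tailSet (by linarith) fun _ => le_mixDensity_of_mem_tailSet heρ

theorem sqHellinger_mixDensity_le (hac : μ ≪ P) (he : e ∈ Set.Icc (0 : ℝ) 1) (heτ : e ≤ τ) :
    sqHellinger P (mixDensity P μ e) ≤ tailMass P μ e τ + truncVariance P μ e τ := by
  refine ((isProbDensity_mixDensity hac he).sqHellinger_le_setIntegral_add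
    measurableSet_tailSet (fun a ha => ?_) fun _ => mixDensity_le_of_notMem_tailSet he.1).trans
      (add_le_add_left ?_ _)
  · simpa using le_mixDensity_of_mem_tailSet heτ ha
  · rw [setIntegral_tailSet_mixDensity_sub_one hac]
    exact sub_le_self _ (mul_nonneg he.1 measureReal_nonneg)

theorem truncMoment_eq (hac : μ ≪ P) (he : 0 ≤ e) :
    truncMoment P μ e τ =
      truncVariance P μ e τ - 2 * e * tailMass P μ e τ + e ^ 2 * P.real (tailSet P μ e τ) := by
  have hA := measurableSet_tailSet (P := P) (μ := μ) (e := e) (τ := τ)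
  have expand (a : α) : (mixDensity P μ e a - 1) ^ 2 =
      (e * dmuP μ P a) ^ 2 - 2 * e * (e * dmuP μ P a) + e ^ 2 := by
    rw [mixDensity_sub_one]
    ring
  have integral_compl : ∫ a in (tailSet P μ e τ)ᶜ, e * dmuP μ P a ∂P = e - tailMass P μ e τ := by
    rw [setIntegral_mul_dmuP hac, probReal_compl_eq_one_sub hA, mul_sub, mul_one]
    rfl
  have cross_integrable :
      IntegrableOn (fun a => 2 * e * (e * dmuP μ P a)) (tailSet P μ e τ)ᶜ P :=
    ((integrable_dmuP.const_mul e).const_mul (2 * e)).integrableOn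
  have sq_integrable := integrableOn_compl_tailSet_sq (P := P) (μ := μ) (τ := τ) he
  have diff_integrable : IntegrableOn (fun a => (e * dmuP μ P a) ^ 2 - 2 * e * (e * dmuP μ P a))
      (tailSet P μ e τ)ᶜ P := sq_integrable.sub cross_integrable
  rw [truncMoment_eq_setIntegral_sub he, truncVariance]
  simp only [expand]
  rw [integral_add diff_integrable (integrable_const _),
    integral_sub sq_integrable cross_integrable, integral_const_mul (2 * e), integral_compl,
    setIntegral_const, probReal_compl_eq_one_sub hA, smul_eq_mul]
  ring

theorem truncMoment_le_truncVariance (hac : μ ≪ P) (he : 0 ≤ e) (heτ : e ≤ τ) :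
    truncMoment P μ e τ ≤ truncVariance P μ e τ := by
  have markov : e * P.real (tailSet P μ e τ) ≤ tailMass P μ e τ :=
    (mul_le_mul_of_nonneg_right heτ measureReal_nonneg).trans
      (mul_measureReal_tailSet_le_tailMass hac)
  have tail_nonneg := tailMass_nonneg (P := P) (μ := μ) (τ := τ) he
  rw [truncMoment_eq hac he]
  nlinarith [mul_le_mul_of_nonneg_left markov he, mul_nonneg he tail_nonneg]

theorem truncVariance_le_truncMoment_add (hac : μ ≪ P) (he : e ∈ Set.Icc (0 : ℝ) 1) :
    truncVariance P μ e τ ≤ truncMoment P μ e τ + 2 * tailMass P μ e τ := by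
  have prob_nonneg : 0 ≤ e ^ 2 * P.real (tailSet P μ e τ) :=
    mul_nonneg (sq_nonneg e) measureReal_nonneg
  rw [truncMoment_eq hac he.1]
  nlinarith [mul_le_mul_of_nonneg_right he.2 (tailMass_nonneg (P := P) (μ := μ) (τ := τ) he.1)]

end Mixture

section Detection

variable {N : Type*} {l : Filter N} {ι : N → Type*} [∀ n, Fintype (ι n)]
  {α : ∀ n, ι n → Type*} [∀ n i, MeasurableSpace (α n i)] {P μ : ∀ n i, Measure (α n i)}
  [∀ n i, IsProbabilityMeasure (P n i)] [∀ n i, IsProbabilityMeasure (μ n i)]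
  {ε : ∀ n, ι n → ℝ} {ρ τ : ℝ}

theorem tendsto_sum_sqHellinger_mixDensity_iff (hρτ : ρ < τ)
    (hac : ∀ n i, μ n i ≪ P n i) (hε : ∀ n i, ε n i ∈ Set.Icc (0 : ℝ) 1)
    (hερ : ∀ᶠ n in l, ∀ i, ε n i ≤ ρ) :
    Tendsto (fun n => ∑ i, sqHellinger (P n i) (mixDensity (P n i) (μ n i) (ε n i))) l (𝓝 0) ↔
      Tendsto (fun n => ∑ i, tailMass (P n i) (μ n i) (ε n i) τ) l (𝓝 0) ∧
        Tendsto (fun n => ∑ i, truncVariance (P n i) (μ n i) (ε n i) τ) l (𝓝 0) := by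
  refine ⟨fun h => ⟨?_, ?_⟩, fun ⟨htail, hvar⟩ => ?_⟩
  · exact tendsto_sum_zero_of_le_const_mul (fun n i => tailMass_nonneg (hε n i).1)
      (hερ.mono fun n hn i => tailMass_le_mul_sqHellinger (hac n i) (hε n i) (hn i) hρτ) h
  · exact tendsto_sum_zero_of_le_const_mul (fun n i => truncVariance_nonneg)
      (hερ.mono fun n hn i => truncVariance_le_mul_sqHellinger (hac n i) (hε n i)
        ((hε n i).1.trans ((hn i).trans hρτ.le))) h
  · refine squeeze_zero' (Eventually.of_forall fun n => Finset.sum_nonneg fun i _ =>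
      sqHellinger_nonneg _ _) (hερ.mono fun n hn => ?_) (by simpa using htail.add hvar)
    rw [← Finset.sum_add_distrib]
    exact Finset.sum_le_sum fun i _ =>
      sqHellinger_mixDensity_le (hac n i) (hε n i) ((hn i).trans hρτ.le)

theorem tendsto_sum_truncVariance_iff (hac : ∀ n i, μ n i ≪ P n i)
    (hε : ∀ n i, ε n i ∈ Set.Icc (0 : ℝ) 1) (hετ : ∀ᶠ n in l, ∀ i, ε n i ≤ τ)
    (htail : Tendsto (fun n => ∑ i, tailMass (P n i) (μ n i) (ε n i) τ) l (𝓝 0)) :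
    Tendsto (fun n => ∑ i, truncVariance (P n i) (μ n i) (ε n i) τ) l (𝓝 0) ↔
      Tendsto (fun n => ∑ i, truncMoment (P n i) (μ n i) (ε n i) τ) l (𝓝 0) := by
  have moment_le : ∀ᶠ n in l, ∑ i, truncMoment (P n i) (μ n i) (ε n i) τ ≤
      ∑ i, truncVariance (P n i) (μ n i) (ε n i) τ :=
    hετ.mono fun n hn => Finset.sum_le_sum fun i _ =>
      truncMoment_le_truncVariance (hac n i) (hε n i).1 (hn i)
  have variance_le (n : N) : ∑ i, truncVariance (P n i) (μ n i) (ε n i) τ ≤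
      ∑ i, truncMoment (P n i) (μ n i) (ε n i) τ +
        2 * ∑ i, tailMass (P n i) (μ n i) (ε n i) τ := by
    rw [Finset.mul_sum, ← Finset.sum_add_distrib]
    exact Finset.sum_le_sum fun i _ => truncVariance_le_truncMoment_add (hac n i) (hε n i)
  constructor <;> intro h
  · refine tendsto_of_tendsto_of_tendsto_of_le_of_le' ?_ h
      (Eventually.of_forall fun n => sub_le_iff_le_add.mpr (variance_le n)) moment_le
    simpa using h.sub (htail.const_mul 2)
  · refine squeeze_zero (fun n => Finset.sum_nonneg fun i _ => truncVariance_nonneg) variance_le ?_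
    simpa using h.add (htail.const_mul 2)

theorem statement1_general (hρτ : ρ < τ) (hac : ∀ n i, μ n i ≪ P n i)
    (hε : ∀ n i, ε n i ∈ Set.Icc (0 : ℝ) 1) (hερ : ∀ᶠ n in l, ∀ i, ε n i ≤ ρ) :
    Tendsto (fun n => tvDist (Measure.pi (P n))
        (Measure.pi fun i => Qmix (P n i) (μ n i) (ε n i))) l (𝓝 0) ↔
      Tendsto (fun n => ∑ i, tailMass (P n i) (μ n i) (ε n i) τ) l (𝓝 0) ∧
        Tendsto (fun n => ∑ i, truncMoment (P n i) (μ n i) (ε n i) τ) l (𝓝 0) := by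
  have hετ : ∀ᶠ n in l, ∀ i, ε n i ≤ τ := hερ.mono fun n hn i => (hn i).trans hρτ.le
  simp only [Qmix_eq_withDensity (hac _ _) (hε _ _)]
  rw [tendsto_tvDist_pi_withDensity_iff_tendsto_sum_sqHellinger
      fun n i => isProbDensity_mixDensity (hac n i) (hε n i),
    tendsto_sum_sqHellinger_mixDensity_iff hρτ hac hε hερ]
  exact and_congr_right (tendsto_sum_truncVariance_iff hac hε hετ)

end Detection

lemma eventually_forall_lt_of_tendsto_iSup {N : Type*} {l : Filter N} {ι : N → Type*}
    [∀ n, Finite (ι n)] {f : ∀ n, ι n → ℝ} {b c : ℝ} (hbc : b < c)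
    (h : Tendsto (fun n => ⨆ i, f n i) l (𝓝 b)) : ∀ᶠ n in l, ∀ i, f n i < c := by
  filter_upwards [h.eventually (gt_mem_nhds hbc)] with n hn i
  exact (le_ciSup (Set.finite_range (f n)).bddAbove i).trans_lt hn

/-- **Statement 0** (Theorem on trivial limits, undetectable case):
for fixed `τ > 0`, undetectability `‖P_(n) − Q_(n)‖ → 0` holds iff
both `I_{n,1,τ} → 0` and `I_{n,2,τ} → 0`. -/
theorem statement1 {α : Type*} [MeasurableSpace α]
    (k : ℕ → ℕ) (P μ : ℕ → ℕ → Measure α) (ε : ℕ → ℕ → ℝ) (τ : ℝ) (hτ : 0 < τ)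
    (hk : Tendsto k atTop atTop)
    (hP : ∀ n i, IsProbabilityMeasure (P n i))
    (hμ : ∀ n i, IsProbabilityMeasure (μ n i))
    (hac : ∀ n i, μ n i ≪ P n i)
    (hε : ∀ n i, ε n i ∈ Set.Icc (0 : ℝ) 1)
    (hεmax : Tendsto (fun n => ⨆ i : Fin (k n), ε n i) atTop (nhds 0)) :
    Tendsto (fun n => tvDist (Pprod P k n) (Qprod P μ ε k n)) atTop (nhds 0) ↔
      (Tendsto (fun n => I1 P μ ε k τ n) atTop (nhds 0) ∧
        Tendsto (fun n => I2 P μ ε k τ n) atTop (nhds 0)) := by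
  have hε_le : ∀ᶠ n in atTop, ∀ i : Fin (k n), ε n i ≤ τ / 2 :=
    (eventually_forall_lt_of_tendsto_iSup (half_pos hτ) hεmax).mono fun n hn i => (hn i).le
  simpa only [Pprod, Qprod, I1, I2, Finset.sum_range, tailMass, tailSet, truncMoment] using
    statement1_general (ι := fun n => Fin (k n)) (P := fun n i => P n i)
      (μ := fun n i => μ n i) (ε := fun n i => ε n i) (half_lt_self hτ) (fun n i => hac n i)
      (fun n i => hε n i) hε_le

end
end

section
/- Suppose T_n converges in distribution under P_(n) to ξ1 and under Q_(n) to ξ2, where ξ1, ξ2 take values in the extended real line [−∞,∞]. Then either P(ξ1 ∈ ℝ) = 1 or P(ξ1 = −∞) = 1; and in the latter case also P(ξ2 = +∞) = 1. -/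
open MeasureTheory Filter Topology

noncomputable section

/-- Extended likelihood ratio `dQ/dP` with values in `[0,∞]` (equal to `+∞` on the
`P`-singular part of `Q`), computed via densities w.r.t. `P + Q`. -/
def elr {α : Type*} [MeasurableSpace α] (Q P : Measure α) (a : α) : ENNReal :=
  Q.rnDeriv (P + Q) a / P.rnDeriv (P + Q) a

/-- Log-likelihood ratio statistic `T_n = Σ_{i<k_n} log(dQ_{n,i}/dP_{n,i})(y_i)`,
with values in `[−∞,∞]`. -/
def Tstat {α : Type*} [MeasurableSpace α] (P μ : ℕ → ℕ → Measure α) (ε : ℕ → ℕ → ℝ)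
    (k : ℕ → ℕ) (n : ℕ) (y : Fin (k n) → α) : EReal :=
  ∑ i : Fin (k n), ENNReal.log (elr (Qmix (P n i) (μ n i) (ε n i)) (P n i) (y i))

/-- Law of `T_n` under the null `P_(n)`. -/
def lawP {α : Type*} [MeasurableSpace α] (P μ : ℕ → ℕ → Measure α) (ε : ℕ → ℕ → ℝ)
    (k : ℕ → ℕ) (n : ℕ) : Measure EReal :=
  (Pprod P k n).map (Tstat P μ ε k n)

/-- Law of `T_n` under the alternative `Q_(n)`. -/
def lawQ {α : Type*} [MeasurableSpace α] (P μ : ℕ → ℕ → Measure α) (ε : ℕ → ℕ → ℝ)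
    (k : ℕ → ℕ) (n : ℕ) : Measure EReal :=
  (Qprod P μ ε k n).map (Tstat P μ ε k n)

/-- Weak convergence of a sequence of measures (convergence in distribution):
integrals of bounded continuous functions converge. -/
def WeakLim {β : Type*} [MeasurableSpace β] [TopologicalSpace β]
    (μs : ℕ → Measure β) (ν : Measure β) : Prop :=
  ∀ f : BoundedContinuousFunction β ℝ,
    Tendsto (fun n => ∫ x, f x ∂(μs n)) atTop (nhds (∫ x, f x ∂ν))

end
noncomputable section

/-! Write `r` for a likelihood ratio `dQ/dP`. If `r ≥ c > 0`, then `E_P[r^(-1/2)]` is at most a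
fixed negative power of the Hellinger affinity `E_P[r^(1/2)]`. Both quantities are multiplicative
over products, so the same bound holds, with the same power, for the whole product experiment. If
`ξ1` has an atom at `-∞`, then `E_P[exp(-T_n/2)] → ∞`, hence
`E_Q[exp(-T_n/2)] = E_P[exp(T_n/2)] → 0`, which sends `T_n` to `-∞` under `P` and to `+∞` under `Q`.
In any case `E_P[exp(T_n)] = 1` prevents `ξ1` from charging `+∞`. -/

open scoped ENNReal NNReal

section ExpMoment

/-- The moment generating function at `p` of a law on the extended line. It is `∞` when `p < 0` and
`ρ` charges `-∞`, or when `p > 0` and `ρ` charges `+∞`. -/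
def expMoment (p : ℝ) (ρ : Measure EReal) : ℝ≥0∞ :=
  ∫⁻ x, EReal.exp x ^ p ∂ρ

lemma continuous_exp_rpow (p : ℝ) : Continuous fun x => EReal.exp x ^ p :=
  ENNReal.continuous_rpow_const.comp ENNReal.continuous_exp

lemma exp_sum {ι : Type*} (s : Finset ι) (f : ι → EReal) :
    EReal.exp (∑ i ∈ s, f i) = ∏ i ∈ s, EReal.exp (f i) := by
  induction s using Finset.cons_induction with
  | empty => simp
  | cons i s hi ih => rw [Finset.sum_cons, Finset.prod_cons, EReal.exp_add, ih]

variable {p : ℝ} {ρ : Measure EReal}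

lemma expMoment_map {Ω : Type*} [MeasurableSpace Ω] {μ : Measure Ω} {T : Ω → EReal}
    (hT : Measurable T) : expMoment p (μ.map T) = ∫⁻ ω, EReal.exp (T ω) ^ p ∂μ :=
  lintegral_map (continuous_exp_rpow p).measurable hT

lemma expMoment_zero [IsProbabilityMeasure ρ] : expMoment 0 ρ = 1 := by
  simp [expMoment]

lemma ae_exp_rpow_eq_zero_of_expMoment_eq_zero (h : expMoment p ρ = 0) :
    ∀ᵐ x ∂ρ, EReal.exp x ^ p = 0 :=
  (lintegral_eq_zero_iff (continuous_exp_rpow p).measurable).1 h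

lemma measure_bot_eq_one_of_expMoment_eq_zero [IsProbabilityMeasure ρ] (hp : 0 < p)
    (h : expMoment p ρ = 0) : ρ {⊥} = 1 := by
  rw [← mem_ae_iff_prob_eq_one (measurableSet_singleton _)]
  filter_upwards [ae_exp_rpow_eq_zero_of_expMoment_eq_zero h] with x hx
  rwa [ENNReal.rpow_eq_zero_iff_of_pos hp, EReal.exp_eq_zero_iff] at hx

lemma measure_top_eq_one_of_expMoment_eq_zero [IsProbabilityMeasure ρ] (hp : p < 0)
    (h : expMoment p ρ = 0) : ρ {⊤} = 1 := by
  rw [← mem_ae_iff_prob_eq_one (measurableSet_singleton _)]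
  filter_upwards [ae_exp_rpow_eq_zero_of_expMoment_eq_zero h] with x hx
  simpa [ENNReal.rpow_eq_zero_iff, hp, hp.not_gt] using hx

lemma measure_singleton_eq_zero_of_expMoment_ne_top {x : EReal} (hx : EReal.exp x ^ p = ∞)
    (h : expMoment p ρ ≠ ∞) : ρ {x} = 0 := by
  have hfin : ∀ᵐ y ∂ρ, EReal.exp y ^ p < ∞ :=
    ae_lt_top (continuous_exp_rpow p).measurable h
  refine measure_mono_null ?_ hfin
  rintro _ rfl
  simp [hx]

lemma measure_top_eq_zero_of_expMoment_ne_top (hp : 0 < p) (h : expMoment p ρ ≠ ∞) : ρ {⊤} = 0 :=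
  measure_singleton_eq_zero_of_expMoment_ne_top (by simp [hp]) h

lemma expMoment_eq_top_of_measure_bot_ne_zero (hp : p < 0) (h : ρ {⊥} ≠ 0) : expMoment p ρ = ∞ := by
  contrapose! h
  exact measure_singleton_eq_zero_of_expMoment_ne_top (by simp [hp]) h

lemma measure_ne_bot_and_ne_top_eq_one [IsProbabilityMeasure ρ] (hbot : ρ {⊥} = 0)
    (htop : ρ {⊤} = 0) : ρ {x : EReal | x ≠ ⊥ ∧ x ≠ ⊤} = 1 := by
  have hcompl : {x : EReal | x ≠ ⊥ ∧ x ≠ ⊤} = ({⊥} ∪ {⊤})ᶜ := by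
    ext x
    simp [and_comm]
  rw [hcompl, prob_compl_eq_one_iff
    ((measurableSet_singleton _).union (measurableSet_singleton _))]
  exact measure_union_null hbot htop

end ExpMoment

section WeakLim

variable {β : Type*} [MeasurableSpace β] [TopologicalSpace β] [OpensMeasurableSpace β]
  {L : ℕ → Measure β} {ν : Measure β} [∀ n, IsFiniteMeasure (L n)] [IsFiniteMeasure ν]

lemma WeakLim.tendsto_lintegral (h : WeakLim L ν) (f : BoundedContinuousFunction β ℝ≥0) :
    Tendsto (fun n => ∫⁻ x, f x ∂(L n)) atTop (𝓝 (∫⁻ x, f x ∂ν)) := by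
  let Lf : ℕ → FiniteMeasure β := fun n => ⟨L n, inferInstance⟩
  let νf : FiniteMeasure β := ⟨ν, inferInstance⟩
  have hL : Tendsto Lf atTop (𝓝 νf) := FiniteMeasure.tendsto_iff_forall_integral_tendsto.2 h
  exact FiniteMeasure.tendsto_iff_forall_lintegral_tendsto.1 hL f

lemma WeakLim.tendsto_lintegral_min (h : WeakLim L ν) {F : β → ℝ≥0∞} (hF : Continuous F)
    (M : ℝ≥0) :
    Tendsto (fun n => ∫⁻ x, min (F x) M ∂(L n)) atTop (𝓝 (∫⁻ x, min (F x) M ∂ν)) := by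
  have hne : ∀ x, min (F x) M ≠ ∞ := fun x =>
    ne_top_of_le_ne_top ENNReal.coe_ne_top (min_le_right _ _)
  have hcont : Continuous fun x => (min (F x) M).toNNReal :=
    ENNReal.continuousOn_toNNReal.comp_continuous (hF.min continuous_const) hne
  have hle : ∀ x, (min (F x) M).toNNReal ≤ M := fun x =>
    ENNReal.toNNReal_mono ENNReal.coe_ne_top (min_le_right _ _)
  have hdist : ∀ x y, dist (min (F x) M).toNNReal (min (F y) M).toNNReal ≤ M := fun x y =>
    abs_sub_le_of_nonneg_of_le (NNReal.coe_nonneg _) (hle x) (NNReal.coe_nonneg _) (hle y)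
  simpa [ENNReal.coe_toNNReal (hne _)] using
    h.tendsto_lintegral (BoundedContinuousFunction.mkOfBound ⟨_, hcont⟩ M hdist)

lemma WeakLim.lintegral_le_liminf (h : WeakLim L ν) {F : β → ℝ≥0∞} (hF : Continuous F) :
    ∫⁻ x, F x ∂ν ≤ liminf (fun n => ∫⁻ x, F x ∂(L n)) atTop := by
  have hsup : ∀ x, F x = ⨆ M : ℕ, min (F x) (M : ℝ≥0) := fun x => by
    rw [← inf_iSup_eq]
    simp [ENNReal.iSup_natCast]
  have hmeas : ∀ M : ℕ, Measurable fun x => min (F x) (M : ℝ≥0) := fun M =>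
    hF.measurable.min measurable_const
  have hmono : Monotone fun (M : ℕ) x => min (F x) (M : ℝ≥0) := fun M N hMN x => by
    dsimp only
    gcongr
  rw [lintegral_congr hsup, lintegral_iSup hmeas hmono]
  refine iSup_le fun M => ?_
  rw [← (h.tendsto_lintegral_min hF M).liminf_eq]
  exact liminf_le_liminf (Eventually.of_forall fun n => lintegral_mono fun x => min_le_left _ _)

end WeakLim

section WeakLimEReal

variable {L : ℕ → Measure EReal} {ν : Measure EReal} [∀ n, IsFiniteMeasure (L n)]
  [IsFiniteMeasure ν]

lemma WeakLim.expMoment_le_liminf (h : WeakLim L ν) (p : ℝ) :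
    expMoment p ν ≤ liminf (fun n => expMoment p (L n)) atTop :=
  h.lintegral_le_liminf (continuous_exp_rpow p)

lemma WeakLim.expMoment_eq_zero (h : WeakLim L ν) {p : ℝ}
    (hL : Tendsto (fun n => expMoment p (L n)) atTop (𝓝 0)) : expMoment p ν = 0 :=
  le_zero_iff.1 (hL.liminf_eq ▸ h.expMoment_le_liminf p)

lemma WeakLim.tendsto_expMoment_top (h : WeakLim L ν) {p : ℝ}
    (hν : expMoment p ν = ∞) : Tendsto (fun n => expMoment p (L n)) atTop (𝓝 ∞) :=
  tendsto_of_le_liminf_of_limsup_le (hν ▸ h.expMoment_le_liminf p) le_top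

end WeakLimEReal

section Inequalities

lemma inv_add_mul_le {m : ℕ} {u : ℝ≥0∞} (hu : 1 ≤ m * u) :
    u⁻¹ + (2 * m + 1) * u ≤ m + 2 + m * u ^ 2 := by
  have hm : m ≠ 0 := by
    rintro rfl
    simp at hu
  rcases eq_or_ne u ∞ with rfl | hu_top
  · simp [hm]
  lift u to ℝ≥0 using hu_top
  have hu_ne : u ≠ 0 := by
    rintro rfl
    simp at hu
  have hu' : (1 : ℝ) ≤ m * u := by exact_mod_cast hu
  have hpos : (0 : ℝ) < u := by positivity
  have hreal : (u : ℝ)⁻¹ + (2 * m + 1) * u ≤ m + 2 + m * u ^ 2 := by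
    have hfactor : (m + 2 + m * (u : ℝ) ^ 2) - ((u : ℝ)⁻¹ + (2 * m + 1) * u)
        = (u - 1) ^ 2 * (m * u - 1) / u := by
      field_simp
      ring
    have hnonneg : 0 ≤ ((u : ℝ) - 1) ^ 2 * (m * u - 1) / u :=
      div_nonneg (mul_nonneg (sq_nonneg _) (sub_nonneg.2 hu')) hpos.le
    linarith
  rw [← ENNReal.coe_inv hu_ne]
  exact_mod_cast hreal

lemma mul_pow_le_one_of_add_mul_le {K : ℕ} (hK : K ≠ 0) {a b : ℝ≥0∞}
    (h : b + K * a ≤ K + 1) : b * a ^ K ≤ 1 := by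
  have hb : b ≠ ∞ := by
    rintro rfl
    simp at h
  have ha : a ≠ ∞ := by
    rintro rfl
    simp [hK] at h
  lift a to ℝ≥0 using ha
  lift b to ℝ≥0 using hb
  have hreal : (b : ℝ) + K * a ≤ K + 1 := by exact_mod_cast h
  have hK1 : (1 : ℝ) ≤ K := by exact_mod_cast Nat.one_le_iff_ne_zero.2 hK
  have ha2 : (a : ℝ) ≤ 2 := by nlinarith [b.coe_nonneg]
  have hbernoulli : (1 : ℝ) + K * (1 - a) ≤ (1 + (1 - a)) ^ K :=
    one_add_mul_le_pow (by linarith) K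
  have hprod : (b : ℝ) * a ^ K ≤ 1 := calc
    (b : ℝ) * a ^ K ≤ (1 + (1 - a)) ^ K * a ^ K := by
      gcongr
      linarith
    _ = ((1 + (1 - a)) * a) ^ K := (mul_pow _ _ _).symm
    _ ≤ 1 := pow_le_one₀ (mul_nonneg (by linarith) a.coe_nonneg)
      (by nlinarith [sq_nonneg ((a : ℝ) - 1)])
  exact_mod_cast hprod

lemma tendsto_zero_of_mul_pow_le_one {ι : Type*} {l : Filter ι} {K : ℕ} (hK : K ≠ 0)
    {a b : ι → ℝ≥0∞} (hb : Tendsto b l (𝓝 ∞)) (h : ∀ᶠ i in l, b i * a i ^ K ≤ 1) :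
    Tendsto a l (𝓝 0) := by
  have hpow : Tendsto (fun i => a i ^ K) l (𝓝 0) := by
    have hinv : Tendsto (fun i => (b i)⁻¹) l (𝓝 0) :=
      ENNReal.inv_top ▸ tendsto_inv_iff.2 hb
    refine tendsto_of_tendsto_of_tendsto_of_le_of_le' tendsto_const_nhds hinv
      (Eventually.of_forall fun _ => zero_le) ?_
    filter_upwards [h] with i hi
    exact ENNReal.le_inv_iff_mul_le.2 (mul_comm (b i) _ ▸ hi)
  have hroot := (ENNReal.continuous_rpow_const (y := (K : ℝ)⁻¹)).tendsto 0 |>.comp hpow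
  simpa [Function.comp_def, ENNReal.pow_rpow_inv_natCast hK, Nat.pos_of_ne_zero hK] using hroot

end Inequalities

section LikelihoodRatio

variable {α : Type*} [MeasurableSpace α]

lemma measurable_elr (Q P : Measure α) : Measurable (elr Q P) :=
  (Measure.measurable_rnDeriv _ _).div (Measure.measurable_rnDeriv _ _)

variable {P Q : Measure α}

lemma rnDeriv_ae_eq_elr [SigmaFinite P] [SigmaFinite Q] : Q.rnDeriv P =ᵐ[P] elr Q P := by
  simpa only [add_comm Q P] using! Measure.rnDeriv_eq_div_rnDeriv_add Q P

lemma ae_elr_ne_top [SigmaFinite P] [SigmaFinite Q] : ∀ᵐ x ∂P, elr Q P x ≠ ∞ := by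
  filter_upwards [rnDeriv_ae_eq_elr (P := P) (Q := Q), Q.rnDeriv_ne_top P] with x hx hfin
  rwa [← hx]

lemma ae_le_elr_of_smul_le [SigmaFinite P] [SigmaFinite Q] (hQ : Q ≪ P) {c : ℝ≥0∞}
    (hc : c • P ≤ Q) : ∀ᵐ x ∂P, c ≤ elr Q P x := by
  have hle : ∀ᵐ x ∂P, c ≤ Q.rnDeriv P x := by
    refine ae_le_of_forall_setLIntegral_le_of_sigmaFinite measurable_const fun s _ _ => ?_
    rw [setLIntegral_const, Measure.setLIntegral_rnDeriv hQ]
    exact hc s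
  filter_upwards [hle, rnDeriv_ae_eq_elr (P := P) (Q := Q)] with x hx heq
  rwa [← heq]

lemma lintegral_elr_rpow [SigmaFinite P] [SigmaFinite Q] (hQ : Q ≪ P) {p : ℝ} (hp : 0 < 1 + p) :
    ∫⁻ x, elr Q P x ^ p ∂Q = ∫⁻ x, elr Q P x ^ (1 + p) ∂P := by
  rw [← lintegral_rnDeriv_mul hQ ((measurable_elr Q P).pow_const p).aemeasurable]
  refine lintegral_congr_ae ?_
  filter_upwards [rnDeriv_ae_eq_elr (P := P) (Q := Q), ae_elr_ne_top (P := P) (Q := Q)]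
    with x hx hfin
  rw [hx, ENNReal.rpow_add_of_add_pos hfin 1 p hp, ENNReal.rpow_one]

lemma lintegral_elr_rpow_mul_pow_le_one [IsProbabilityMeasure P] [IsProbabilityMeasure Q]
    (hQ : Q ≪ P) {c : ℝ≥0∞} (hc : c • P ≤ Q) {m : ℕ} (hm : 1 ≤ m * c ^ (1 / 2 : ℝ)) :
    (∫⁻ x, elr Q P x ^ (-(1 / 2) : ℝ) ∂P) * (∫⁻ x, elr Q P x ^ (1 / 2 : ℝ) ∂P) ^ (2 * m + 1)
      ≤ 1 := by
  have hmass : ∫⁻ x, elr Q P x ∂P = 1 := by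
    simpa using (lintegral_elr_rpow hQ (p := 0) (by norm_num)).symm
  have hpointwise : ∀ᵐ x ∂P, elr Q P x ^ (-(1 / 2) : ℝ) + (2 * m + 1) * elr Q P x ^ (1 / 2 : ℝ)
      ≤ m + 2 + m * elr Q P x := by
    filter_upwards [ae_le_elr_of_smul_le hQ hc] with x hx
    have hu : 1 ≤ m * elr Q P x ^ (1 / 2 : ℝ) := hm.trans (by gcongr)
    have hsq : (elr Q P x ^ (1 / 2 : ℝ)) ^ 2 = elr Q P x := by
      simpa using ENNReal.rpow_inv_natCast_pow two_ne_zero (elr Q P x)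
    simpa only [ENNReal.rpow_neg, hsq] using inv_add_mul_le hu
  refine mul_pow_le_one_of_add_mul_le (by positivity) ?_
  have hmeas := measurable_elr Q P
  have hintegral := lintegral_mono_ae hpointwise
  rw [lintegral_add_left (hmeas.pow_const _), lintegral_const_mul _ (hmeas.pow_const _),
    lintegral_add_left measurable_const, lintegral_const_mul _ hmeas, hmass, lintegral_const,
    measure_univ] at hintegral
  convert hintegral using 1
  · push_cast
    rfl
  · push_cast
    ring

end LikelihoodRatio

section Mixture

variable {α : Type*} [MeasurableSpace α] {P μ : Measure α} {e : ℝ}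

instance [IsFiniteMeasure P] [IsFiniteMeasure μ] : IsFiniteMeasure (Qmix P μ e) := by
  have hP := P.smul_finite (ENNReal.ofReal_ne_top (r := 1 - e))
  have hμ := μ.smul_finite (ENNReal.ofReal_ne_top (r := e))
  exact isFiniteMeasureAdd

lemma isProbabilityMeasure_Qmix [IsProbabilityMeasure P] [IsProbabilityMeasure μ]
    (he : e ∈ Set.Icc (0 : ℝ) 1) : IsProbabilityMeasure (Qmix P μ e) := by
  constructor
  simp [Qmix, ← ENNReal.ofReal_add (sub_nonneg.2 he.2) he.1]

lemma Qmix_absolutelyContinuous (hac : μ ≪ P) : Qmix P μ e ≪ P :=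
  Measure.smul_absolutelyContinuous.add_left (Measure.smul_absolutelyContinuous.trans hac)

lemma smul_le_Qmix {δ : ℝ} (he : e ≤ δ) : ENNReal.ofReal (1 - δ) • P ≤ Qmix P μ e := by
  refine le_trans ?_ (Measure.le_add_right le_rfl)
  gcongr

end Mixture

lemma lintegral_pi_prod {ι : Type*} [Fintype ι] {Ω : ι → Type*} [∀ i, MeasurableSpace (Ω i)]
    (R : ∀ i, Measure (Ω i)) [∀ i, IsProbabilityMeasure (R i)] {f : ∀ i, Ω i → ℝ≥0∞}
    (hf : ∀ i, Measurable (f i)) :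
    ∫⁻ y, ∏ i, f i (y i) ∂(Measure.pi R) = ∏ i, ∫⁻ x, f i x ∂(R i) := by
  rw [ProbabilityTheory.lintegral_prod_eq_prod_lintegral_of_indepFun Finset.univ
    (fun i (y : ∀ j, Ω j) => f i (y i))
    (ProbabilityTheory.iIndepFun_pi fun i => (hf i).aemeasurable)
    fun i => (hf i).comp (measurable_pi_apply i)]
  exact Finset.prod_congr rfl fun i _ => (measurePreserving_eval R i).lintegral_comp (hf i)

lemma lintegral_exp_sum_log_rpow {ι : Type*} [Fintype ι] {Ω : ι → Type*}
    [∀ i, MeasurableSpace (Ω i)] (R : ∀ i, Measure (Ω i)) [∀ i, IsProbabilityMeasure (R i)]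
    {f : ∀ i, Ω i → ℝ≥0∞} (hf : ∀ i, Measurable (f i)) (hfin : ∀ i, ∀ᵐ x ∂(R i), f i x ≠ ∞)
    (p : ℝ) :
    ∫⁻ y, EReal.exp (∑ i, ENNReal.log (f i (y i))) ^ p ∂(Measure.pi R)
      = ∏ i, ∫⁻ x, f i x ^ p ∂(R i) := by
  have hfin_pi : ∀ᵐ y ∂(Measure.pi R), ∀ i, f i (y i) ≠ ∞ := ae_all_iff.2 fun i =>
    (Measure.quasiMeasurePreserving_eval (μ := R) i).ae (hfin i)
  rw [← lintegral_pi_prod R fun i => (hf i).pow_const p]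
  refine lintegral_congr_ae ?_
  filter_upwards [hfin_pi] with y hy
  simp only [exp_sum, ENNReal.exp_log, ENNReal.prod_rpow_of_ne_top fun i _ => hy i]

section Detection

variable {α : Type*} [MeasurableSpace α] {P μ : ℕ → ℕ → Measure α} {ε : ℕ → ℕ → ℝ} {k : ℕ → ℕ}
  {n : ℕ}

lemma measurable_Tstat : Measurable (Tstat P μ ε k n) :=
  Finset.measurable_fun_sum _ fun i _ =>
    ((measurable_elr _ _).comp (measurable_pi_apply i)).ennreal_log

variable [∀ n i, IsProbabilityMeasure (P n i)]

instance : IsProbabilityMeasure (lawP P μ ε k n) :=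
  Measure.isProbabilityMeasure_map (μ := Measure.pi _) measurable_Tstat.aemeasurable

variable [∀ n i, IsProbabilityMeasure (μ n i)]

lemma isProbabilityMeasure_lawQ (hε : ∀ n i, ε n i ∈ Set.Icc (0 : ℝ) 1) :
    IsProbabilityMeasure (lawQ P μ ε k n) := by
  have hQ := fun i : Fin (k n) => isProbabilityMeasure_Qmix (P := P n i) (μ := μ n i) (hε n i)
  exact Measure.isProbabilityMeasure_map (μ := Measure.pi _) measurable_Tstat.aemeasurable

lemma expMoment_map_Tstat (R : Fin (k n) → Measure α) [∀ i, IsProbabilityMeasure (R i)]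
    (hR : ∀ i, R i ≪ P n i) (p : ℝ) :
    expMoment p ((Measure.pi R).map (Tstat P μ ε k n))
      = ∏ i : Fin (k n), ∫⁻ x, elr (Qmix (P n i) (μ n i) (ε n i)) (P n i) x ^ p ∂(R i) := by
  rw [expMoment_map measurable_Tstat]
  exact lintegral_exp_sum_log_rpow R (fun i => measurable_elr _ _)
    (fun i => (hR i).ae_le ae_elr_ne_top) p

lemma expMoment_lawP (p : ℝ) :
    expMoment p (lawP P μ ε k n)
      = ∏ i : Fin (k n), ∫⁻ x, elr (Qmix (P n i) (μ n i) (ε n i)) (P n i) x ^ p ∂(P n i) :=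
  expMoment_map_Tstat _ (fun _ => Measure.AbsolutelyContinuous.rfl) p

lemma expMoment_lawQ (hac : ∀ n i, μ n i ≪ P n i) (hε : ∀ n i, ε n i ∈ Set.Icc (0 : ℝ) 1)
    {p : ℝ} (hp : 0 < 1 + p) :
    expMoment p (lawQ P μ ε k n) = expMoment (1 + p) (lawP P μ ε k n) := by
  have hQ := fun i : Fin (k n) => isProbabilityMeasure_Qmix (P := P n i) (μ := μ n i) (hε n i)
  have hQac := fun i : Fin (k n) => Qmix_absolutelyContinuous (e := ε n i) (hac n i)
  rw [lawQ, Qprod, expMoment_map_Tstat _ hQac, expMoment_lawP]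
  exact Finset.prod_congr rfl fun i _ => lintegral_elr_rpow (hQac i) hp

lemma expMoment_one_lawP (hac : ∀ n i, μ n i ≪ P n i) (hε : ∀ n i, ε n i ∈ Set.Icc (0 : ℝ) 1) :
    expMoment 1 (lawP P μ ε k n) = 1 := by
  have hQ := isProbabilityMeasure_lawQ (P := P) (μ := μ) (k := k) (n := n) hε
  simpa [expMoment_zero] using (expMoment_lawQ (k := k) (n := n) hac hε (p := 0) (by simp)).symm

lemma expMoment_lawP_mul_pow_le_one (hac : ∀ n i, μ n i ≪ P n i)
    (hε : ∀ n i, ε n i ∈ Set.Icc (0 : ℝ) 1) {δ : ℝ} (hεδ : ∀ i : Fin (k n), ε n i ≤ δ) {m : ℕ}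
    (hm : 1 ≤ m * ENNReal.ofReal (1 - δ) ^ (1 / 2 : ℝ)) :
    expMoment (-(1 / 2)) (lawP P μ ε k n) * expMoment (1 / 2) (lawP P μ ε k n) ^ (2 * m + 1)
      ≤ 1 := by
  rw [expMoment_lawP, expMoment_lawP, ← Finset.prod_pow, ← Finset.prod_mul_distrib]
  refine Finset.prod_le_one' fun i _ => ?_
  have hQ := isProbabilityMeasure_Qmix (P := P n i) (μ := μ n i) (hε n i)
  exact lintegral_elr_rpow_mul_pow_le_one (Qmix_absolutelyContinuous (hac n i))
    (smul_le_Qmix (hεδ i)) hm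

lemma tendsto_expMoment_half_lawP (hac : ∀ n i, μ n i ≪ P n i)
    (hε : ∀ n i, ε n i ∈ Set.Icc (0 : ℝ) 1) {δ : ℝ} (hδ : δ < 1)
    (hεδ : ∀ᶠ n in atTop, ∀ i : Fin (k n), ε n i ≤ δ)
    (htop : Tendsto (fun n => expMoment (-(1 / 2)) (lawP P μ ε k n)) atTop (𝓝 ∞)) :
    Tendsto (fun n => expMoment (1 / 2) (lawP P μ ε k n)) atTop (𝓝 0) := by
  have hc : ENNReal.ofReal (1 - δ) ^ (1 / 2 : ℝ) ≠ 0 := by simpa using hδ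
  obtain ⟨m, hm⟩ := ENNReal.exists_nat_mul_gt hc ENNReal.one_ne_top
  refine tendsto_zero_of_mul_pow_le_one (Nat.succ_ne_zero (2 * m)) htop ?_
  filter_upwards [hεδ] with n hn
  exact expMoment_lawP_mul_pow_le_one hac hε hn hm.le

end Detection

lemma eventually_forall_le_of_tendsto_iSup {k : ℕ → ℕ} {ε : ℕ → ℕ → ℝ} {a δ : ℝ}
    (h : Tendsto (fun n => ⨆ i : Fin (k n), ε n i) atTop (𝓝 a)) (hδ : a < δ) :
    ∀ᶠ n in atTop, ∀ i : Fin (k n), ε n i ≤ δ := by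
  filter_upwards [h.eventually_le_const hδ] with n hn i
  exact (le_ciSup (Set.finite_range fun i : Fin (k n) => ε n i).bddAbove i).trans hn

theorem statement3_general {α : Type*} [MeasurableSpace α]
    (k : ℕ → ℕ) (P μ : ℕ → ℕ → Measure α) (ε : ℕ → ℕ → ℝ)
    (hP : ∀ n i, IsProbabilityMeasure (P n i))
    (hμ : ∀ n i, IsProbabilityMeasure (μ n i))
    (hac : ∀ n i, μ n i ≪ P n i)
    (hε : ∀ n i, ε n i ∈ Set.Icc (0 : ℝ) 1)
    {δ : ℝ} (hδ : δ < 1) (hεδ : ∀ᶠ n in atTop, ∀ i : Fin (k n), ε n i ≤ δ)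
    (ν1 ν2 : Measure EReal)
    (hν1 : IsProbabilityMeasure ν1) (hν2 : IsProbabilityMeasure ν2)
    (hwP : WeakLim (lawP P μ ε k) ν1) (hwQ : WeakLim (lawQ P μ ε k) ν2) :
    ν1 {x : EReal | x ≠ ⊥ ∧ x ≠ ⊤} = 1 ∨ (ν1 {⊥} = 1 ∧ ν2 {⊤} = 1) := by
  have hlawQ : ∀ n, IsProbabilityMeasure (lawQ P μ ε k n) := fun _ => isProbabilityMeasure_lawQ hε
  by_cases hbot : ν1 {⊥} = 0
  · left
    have hexp : expMoment 1 ν1 ≤ 1 := by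
      simpa [expMoment_one_lawP hac hε] using hwP.expMoment_le_liminf 1
    have hfin : expMoment 1 ν1 ≠ ∞ := ne_top_of_le_ne_top ENNReal.one_ne_top hexp
    exact measure_ne_bot_and_ne_top_eq_one hbot
      (measure_top_eq_zero_of_expMoment_ne_top one_pos hfin)
  · right
    have hP_half : Tendsto (fun n => expMoment (1 / 2) (lawP P μ ε k n)) atTop (𝓝 0) :=
      tendsto_expMoment_half_lawP hac hε hδ hεδ
        (hwP.tendsto_expMoment_top (expMoment_eq_top_of_measure_bot_ne_zero (by norm_num) hbot))
    have hQ_half : Tendsto (fun n => expMoment (-(1 / 2)) (lawQ P μ ε k n)) atTop (𝓝 0) := by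
      refine hP_half.congr fun n => ?_
      rw [expMoment_lawQ hac hε (by norm_num)]
      norm_num
    exact ⟨measure_bot_eq_one_of_expMoment_eq_zero (by norm_num) (hwP.expMoment_eq_zero hP_half),
      measure_top_eq_one_of_expMoment_eq_zero (by norm_num) (hwQ.expMoment_eq_zero hQ_half)⟩

/-- if `T_n → ξ1` in distribution under `P_(n)` and `T_n → ξ2` under
`Q_(n)` (values in `[−∞,∞]`), then either `ξ1` is real-valued a.s. or `ξ1 ≡ −∞` a.s.;
and in the latter case also `ξ2 ≡ +∞` a.s. -/
theorem statement3 {α : Type*} [MeasurableSpace α]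
    (k : ℕ → ℕ) (P μ : ℕ → ℕ → Measure α) (ε : ℕ → ℕ → ℝ)
    (hk : Tendsto k atTop atTop)
    (hP : ∀ n i, IsProbabilityMeasure (P n i))
    (hμ : ∀ n i, IsProbabilityMeasure (μ n i))
    (hac : ∀ n i, μ n i ≪ P n i)
    (hε : ∀ n i, ε n i ∈ Set.Icc (0 : ℝ) 1)
    (hεmax : Tendsto (fun n => ⨆ i : Fin (k n), ε n i) atTop (nhds 0))
    (ν1 ν2 : Measure EReal)
    (hν1 : IsProbabilityMeasure ν1) (hν2 : IsProbabilityMeasure ν2)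
    (hwP : WeakLim (lawP P μ ε k) ν1) (hwQ : WeakLim (lawQ P μ ε k) ν2) :
    ν1 {x : EReal | x ≠ ⊥ ∧ x ≠ ⊤} = 1 ∨ (ν1 {⊥} = 1 ∧ ν2 {⊤} = 1) := by
  exact statement3_general k P μ ε hP hμ hac hε one_half_lt_one
    (eventually_forall_le_of_tendsto_iSup hεmax one_half_pos) ν1 ν2 hν1 hν2 hwP hwQ

end
end
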